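/- Let p > 3 be a prime, m a positive integer, and n = 2m, and suppose p^m ≡ 2 (mod 3). For the power mapping F(x) = x^{p^m+2} over F_{p^n}, the number of b ∈ F_{p^n} with δ(b) = 2 is exactly p^m - 1, i.e., ω_2 = p^m - 1. -/

import Mathlib

/-- The number of `x` in the field `F` with `(x+1)^d - x^d = b`. -/
def deltaF (F : Type*) [Field F] [Fintype F] [DecidableEq F] (d : ℕ) (b : F) : ℕ :=
  (Finset.univ.filter (fun x : F => (x + 1) ^ d - x ^ d = b)).card

/-- The number of `b` in the field `F` with `deltaF F d b = i`. -/
def omegaF (F : Type*) [Field F] [Fintype F] [DecidableEq F] (d i : ℕ) : ℕ :=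
  (Finset.univ.filter (fun b : F => deltaF F d b = i)).card

/-!
Write `q = p ^ m` and let `K ⊆ F` be the fields with `q` and `q ^ 2` elements. Centring by
`x = y - 1 / 2` turns the derivative `(x + 1) ^ (q + 2) - x ^ (q + 2)` into the quadratic form
`y ^ 2 + 2 * y * y ^ q`, up to a constant. As `q ≡ 2 (mod 3)`, a primitive cube root of unity `ζ`
of `F` has conjugate `ζ ^ q = ζ ^ 2`, and in the `K`-basis `ζ`, `ζ ^ 2` of `F` the cross terms
vanish: at `y = u * ζ + v * ζ ^ 2` the form takes the value
`u ^ 2 * (2 + ζ ^ 2) + v ^ 2 * (2 + ζ)`. As `2 + ζ ^ 2`, `2 + ζ` is again a `K`-basis, the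
derivative has the same fibre sizes as `(u, v) ↦ (u ^ 2, v ^ 2)` on `K × K`.
A fibre of the latter has two elements exactly when one
coordinate of the base point is zero and the other is a nonzero square, which gives
`2 * ((q - 1) / 2)` base points.
-/

section FiberSpectrum

variable {α β γ δ : Type*} [Fintype α] [Fintype γ] [DecidableEq β] [DecidableEq δ]

theorem card_fiber_prodMap (f : α → β) (g : γ → δ) (b : β × δ) :
    (Finset.univ.filter fun a ↦ Prod.map f g a = b).card =
      (Finset.univ.filter fun a ↦ f a = b.1).card *
        (Finset.univ.filter fun c ↦ g c = b.2).card := by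
  rw [← Finset.card_product]
  congr 1
  ext a
  simp [Prod.ext_iff]

variable [Fintype β] [Fintype δ]

/-- The number of points of the codomain over which the fibre of `f` has exactly `i` elements.
For the derivative of a power map this is the differential spectrum; an arbitrary `f` is allowed
so that the derivative can be traded for a map with the same fibre sizes. -/
def fiberSpectrum (f : α → β) (i : ℕ) : ℕ :=
  (Finset.univ.filter fun b ↦ (Finset.univ.filter fun a ↦ f a = b).card = i).card

theorem omegaF_eq_fiberSpectrum (F : Type*) [Field F] [Fintype F] [DecidableEq F] (d i : ℕ) :
    omegaF F d i = fiberSpectrum (fun x : F ↦ (x + 1) ^ d - x ^ d) i :=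
  rfl

theorem fiberSpectrum_congr {f : α → β} {g : γ → δ} (φ : α ≃ γ) (ψ : β ≃ δ)
    (h : ∀ a, g (φ a) = ψ (f a)) (i : ℕ) : fiberSpectrum f i = fiberSpectrum g i := by
  have hfiber (b : β) : (Finset.univ.filter fun a ↦ f a = b).card =
      (Finset.univ.filter fun c ↦ g c = ψ b).card :=
    Finset.card_equiv φ fun a ↦ by simp [h]
  exact Finset.card_equiv ψ fun b ↦ by simp [hfiber]

theorem fiberSpectrum_prodMap_prime (f : α → β) (g : γ → δ) {r : ℕ} (hr : r.Prime) :
    fiberSpectrum (Prod.map f g) r =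
      fiberSpectrum f r * fiberSpectrum g 1 + fiberSpectrum f 1 * fiberSpectrum g r := by
  have hmul (s t : ℕ) : s * t = r ↔ s = r ∧ t = 1 ∨ s = 1 ∧ t = r := by
    constructor
    · rintro rfl
      rcases Nat.prime_mul_iff.mp hr with ⟨-, rfl⟩ | ⟨-, rfl⟩ <;> simp
    · rintro (⟨rfl, rfl⟩ | ⟨rfl, rfl⟩) <;> simp
  simp only [fiberSpectrum, card_fiber_prodMap, hmul]
  rw [Finset.filter_or, Finset.card_union_of_disjoint]
  · rw [← Finset.card_product, ← Finset.card_product, ← Finset.filter_product,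
      ← Finset.filter_product, Finset.univ_product_univ]
  · rw [Finset.disjoint_filter]
    rintro b - ⟨hb, -⟩ ⟨hb', -⟩
    exact hr.ne_one (hb.symm.trans hb')

end FiberSpectrum

section Squares

variable {K : Type*} [Field K] [Fintype K] [DecidableEq K]

theorem card_fiber_sq (hK : ringChar K ≠ 2) (a : K) :
    (Finset.univ.filter fun u : K ↦ u ^ 2 = a).card =
      if a = 0 then 1 else if IsSquare a then 2 else 0 := by
  have h := quadraticChar_card_sqrts hK a
  rw [Set.toFinset_ofPred, quadraticChar_apply, quadraticCharFun] at h
  split_ifs at h ⊢ <;> omega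

theorem fiberSpectrum_sq_one (hK : ringChar K ≠ 2) :
    fiberSpectrum (fun u : K ↦ u ^ 2) 1 = 1 := by
  have hiff (a : K) : (if a = 0 then 1 else if IsSquare a then 2 else 0) = 1 ↔ a = 0 := by
    split_ifs <;> simp_all
  simp [fiberSpectrum, card_fiber_sq hK, hiff, Finset.filter_eq']

theorem one_add_two_mul_fiberSpectrum_sq_two (hK : ringChar K ≠ 2) :
    1 + 2 * fiberSpectrum (fun u : K ↦ u ^ 2) 2 = Fintype.card K := by
  have hsplit (a : K) : (Finset.univ.filter fun u : K ↦ u ^ 2 = a).card =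
      (if a = 0 then 1 else 0) +
        2 * if (Finset.univ.filter fun u : K ↦ u ^ 2 = a).card = 2 then 1 else 0 := by
    rw [card_fiber_sq hK]
    split_ifs <;> simp_all
  symm
  calc Fintype.card K
      = ∑ a : K, (Finset.univ.filter fun u : K ↦ u ^ 2 = a).card :=
        Finset.card_eq_sum_card_fiberwise fun _ _ ↦ Finset.mem_coe.mpr (Finset.mem_univ _)
    _ = 1 + 2 * fiberSpectrum (fun u : K ↦ u ^ 2) 2 := by
        rw [Finset.sum_congr rfl fun a _ ↦ hsplit a, Finset.sum_add_distrib, ← Finset.mul_sum,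
          Finset.sum_ite_eq', ← Finset.card_filter, if_pos (Finset.mem_univ _), fiberSpectrum]

theorem fiberSpectrum_prodMap_sq_two (hK : ringChar K ≠ 2) :
    fiberSpectrum (Prod.map (fun u : K ↦ u ^ 2) fun v : K ↦ v ^ 2) 2 = Fintype.card K - 1 := by
  rw [fiberSpectrum_prodMap_prime _ _ Nat.prime_two, fiberSpectrum_sq_one hK,
    ← one_add_two_mul_fiberSpectrum_sq_two hK]
  omega

end Squares

section PairCoordinates

variable {K V : Type*} [DivisionRing K] [AddCommGroup V] [Module K V]

theorem bijective_smul_add_smul (hV : Module.finrank K V = 2) {x y : V}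
    (hxy : LinearIndependent K ![x, y]) :
    Function.Bijective fun w : K × K ↦ w.1 • x + w.2 • y := by
  have : Module.Finite K V := Module.finite_of_finrank_eq_succ hV
  let f : K × K →ₗ[K] V :=
    (LinearMap.toSpanSingleton K V x).coprod (LinearMap.toSpanSingleton K V y)
  have hinj : Function.Injective f := by
    rw [← LinearMap.ker_eq_bot, LinearMap.ker_eq_bot']
    rintro ⟨a, b⟩ hab
    obtain ⟨rfl, rfl⟩ := LinearIndependent.pair_iff.mp hxy a b hab
    rfl
  exact ⟨hinj, (LinearMap.injective_iff_surjective_of_finrank_eq_finrank (by simp [hV])).mp hinj⟩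

end PairCoordinates

theorem exists_isPrimitiveRoot_of_dvd_card_sub_one (F : Type*) [Field F] [Fintype F] {k : ℕ}
    (h : k ∣ Fintype.card F - 1) : ∃ ζ : F, IsPrimitiveRoot ζ k := by
  classical
  obtain ⟨g, hg⟩ := IsCyclic.exists_ofOrder_eq_natCard (α := Fˣ)
  obtain ⟨l, hl⟩ := h
  have hg' : IsPrimitiveRoot (g : F) (Fintype.card F - 1) := by
    rw [IsPrimitiveRoot.coe_units_iff, ← Fintype.card_units, Fintype.card_eq_nat_card, ← hg]
    exact IsPrimitiveRoot.orderOf g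
  exact ⟨g ^ l, hg'.pow (Nat.sub_pos_of_lt Fintype.one_lt_card) (hl.trans (mul_comm k l))⟩

theorem sq_add_self_add_one_of_isPrimitiveRoot_three {R : Type*} [CommRing R] [IsDomain R] {ζ : R}
    (hζ : IsPrimitiveRoot ζ 3) : ζ ^ 2 + ζ + 1 = 0 := by
  have h := hζ.geom_sum_eq_zero (by norm_num)
  simp only [Finset.sum_range_succ, Finset.sum_range_zero] at h
  linear_combination h

section QuadraticExtension

variable {K F : Type*} [Field K] [Fintype K] [Field F] [Algebra K F]

theorem add_half_pow_card_add_two_sub (h2 : (2 : F) ≠ 0) (y : F) :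
    (y + 1 / 2) ^ (Fintype.card K + 2) - (y - 1 / 2) ^ (Fintype.card K + 2) =
      y ^ 2 + 2 * y * y ^ Fintype.card K + 1 / 4 := by
  have hadd := map_add (FiniteField.frobeniusAlgHom K F) y (1 / 2)
  have hsub := map_sub (FiniteField.frobeniusAlgHom K F) y (1 / 2)
  simp only [map_div₀, map_one, map_ofNat, FiniteField.coe_frobeniusAlgHom] at hadd hsub
  have h4 : (4 : F) = 2 ^ 2 := by norm_num
  rw [pow_add, pow_add, hadd, hsub, h4]
  field_simp
  ring

variable {ζ : F}

theorem frobeniusAlgHom_apply_of_isPrimitiveRoot_three (hq : Fintype.card K % 3 = 2)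
    (hζ : IsPrimitiveRoot ζ 3) : FiniteField.frobeniusAlgHom K F ζ = ζ ^ 2 := by
  change ζ ^ Fintype.card K = ζ ^ 2
  rw [← pow_mod_orderOf, ← hζ.eq_orderOf, hq]

theorem algebraMap_ne_of_isPrimitiveRoot_three (hq : Fintype.card K % 3 = 2)
    (hζ : IsPrimitiveRoot ζ 3) (a : K) : algebraMap K F a ≠ ζ := by
  rintro rfl
  have hfix := frobeniusAlgHom_apply_of_isPrimitiveRoot_three hq hζ
  rw [AlgHom.commutes, sq] at hfix
  exact hζ.ne_one (by norm_num) ((left_eq_mul₀ (hζ.ne_zero (by norm_num))).mp hfix)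

theorem linearIndependent_cubeRoots (hq : Fintype.card K % 3 = 2) (hζ : IsPrimitiveRoot ζ 3) :
    LinearIndependent K ![ζ, ζ ^ 2] := by
  have hζ0 : ζ ≠ 0 := hζ.ne_zero (by norm_num)
  refine (LinearIndependent.pair_iff' hζ0).mpr fun a ha ↦
    algebraMap_ne_of_isPrimitiveRoot_three hq hζ a ?_
  rw [Algebra.smul_def] at ha
  apply mul_right_cancel₀ hζ0
  linear_combination ha

theorem linearIndependent_two_add_cubeRoots (hq : Fintype.card K % 3 = 2)
    (hζ : IsPrimitiveRoot ζ 3) : LinearIndependent K ![2 + ζ ^ 2, 2 + ζ] := by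
  have hsum := sq_add_self_add_one_of_isPrimitiveRoot_three hζ
  have hfst : 2 + ζ ^ 2 = 1 - ζ := by linear_combination hsum
  have hsnd : 2 + ζ = (1 - ζ) * (1 + ζ) := by linear_combination hsum
  have hne : 1 - ζ ≠ 0 := sub_ne_zero.mpr (hζ.ne_one (by norm_num)).symm
  rw [hfst, hsnd]
  refine (LinearIndependent.pair_iff' hne).mpr fun a ha ↦
    algebraMap_ne_of_isPrimitiveRoot_three hq hζ (a - 1) ?_
  rw [Algebra.smul_def] at ha
  apply mul_left_cancel₀ hne
  rw [map_sub, map_one]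
  linear_combination ha

theorem pow_card_smul_add_smul_cubeRoots (hq : Fintype.card K % 3 = 2)
    (hζ : IsPrimitiveRoot ζ 3) (u v : K) :
    (u • ζ + v • ζ ^ 2) ^ Fintype.card K = u • ζ ^ 2 + v • ζ := by
  change FiniteField.frobeniusAlgHom K F _ = _
  rw [map_add, map_smul, map_smul, map_pow, frobeniusAlgHom_apply_of_isPrimitiveRoot_three hq hζ]
  congr 2
  linear_combination ζ * hζ.pow_eq_one

theorem sq_add_two_mul_pow_card_cubeRoots (hq : Fintype.card K % 3 = 2)
    (hζ : IsPrimitiveRoot ζ 3) (u v : K) :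
    (u • ζ + v • ζ ^ 2) ^ 2 + 2 * (u • ζ + v • ζ ^ 2) * (u • ζ + v • ζ ^ 2) ^ Fintype.card K =
      u ^ 2 • (2 + ζ ^ 2) + v ^ 2 • (2 + ζ) := by
  rw [pow_card_smul_add_smul_cubeRoots hq hζ]
  simp only [Algebra.smul_def, map_pow]
  set a := algebraMap K F u
  set b := algebraMap K F v
  linear_combination (2 * a ^ 2 + 2 * b ^ 2 + b ^ 2 * ζ) * hζ.pow_eq_one +
    2 * a * b * ζ ^ 2 * sq_add_self_add_one_of_isPrimitiveRoot_three hζ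

theorem omegaF_card_add_two_eq_fiberSpectrum [Fintype F] [DecidableEq F] [DecidableEq K]
    (hrank : Module.finrank K F = 2) (hq : Fintype.card K % 3 = 2) (hK : ringChar K ≠ 2) (i : ℕ) :
    omegaF F (Fintype.card K + 2) i =
      fiberSpectrum (Prod.map (fun u : K ↦ u ^ 2) fun v : K ↦ v ^ 2) i := by
  have h2 : (2 : F) ≠ 0 := Ring.two_ne_zero (Algebra.ringChar_eq K F ▸ hK)
  obtain ⟨ζ, hζ⟩ : ∃ ζ : F, IsPrimitiveRoot ζ 3 := by
    apply exists_isPrimitiveRoot_of_dvd_card_sub_one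
    rw [Module.card_eq_pow_finrank (K := K), hrank]
    have : Fintype.card K ^ 2 % 3 = 1 := by rw [Nat.pow_mod, hq]
    omega
  let φ : K × K ≃ F := (Equiv.ofBijective _ <|
    bijective_smul_add_smul hrank <| linearIndependent_cubeRoots hq hζ).trans
      (Equiv.subRight (1 / 2))
  let ψ : K × K ≃ F := (Equiv.ofBijective _ <|
    bijective_smul_add_smul hrank <| linearIndependent_two_add_cubeRoots hq hζ).trans
      (Equiv.addRight (1 / 4))
  rw [omegaF_eq_fiberSpectrum]
  refine (fiberSpectrum_congr φ ψ (fun ⟨u, v⟩ ↦ ?_) i).symm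
  have hφ : φ (u, v) = u • ζ + v • ζ ^ 2 - 1 / 2 := rfl
  have hφ' : φ (u, v) + 1 = u • ζ + v • ζ ^ 2 + 1 / 2 := by
    rw [hφ]
    field_simp
    ring
  have hψ : ψ (u ^ 2, v ^ 2) = u ^ 2 • (2 + ζ ^ 2) + v ^ 2 • (2 + ζ) + 1 / 4 := rfl
  rw [Prod.map_apply, hψ, hφ', hφ, add_half_pow_card_add_two_sub h2,
    sq_add_two_mul_pow_card_cubeRoots hq hζ]

theorem omegaF_card_add_two_two [Fintype F] [DecidableEq F]
    (hrank : Module.finrank K F = 2) (hq : Fintype.card K % 3 = 2) (hK : ringChar K ≠ 2) :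
    omegaF F (Fintype.card K + 2) 2 = Fintype.card K - 1 := by
  classical
  rw [omegaF_card_add_two_eq_fiberSpectrum hrank hq hK, fiberSpectrum_prodMap_sq_two hK]

end QuadraticExtension

theorem nonempty_algebra_of_card_eq_pow {K F : Type*} [Field K] [Fintype K] [Field F] [Fintype F]
    {k : ℕ} (hF : Fintype.card F = Fintype.card K ^ k) : Nonempty (Algebra K F) := by
  obtain ⟨p, hpK⟩ := CharP.exists K
  obtain ⟨r, hp, hK⟩ := FiniteField.card K p
  have : Fact p.Prime := ⟨hp⟩
  have : CharP F p := charP_of_card_eq_prime_pow (hF.trans (by rw [hK, ← pow_mul]))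
  let _ := ZMod.algebra K p
  let _ := ZMod.algebra F p
  have hrank : Module.finrank (ZMod p) F = Module.finrank (ZMod p) K * k := by
    apply Nat.pow_right_injective hp.two_le
    dsimp only
    rw [pow_mul, FiniteField.pow_finrank_eq_card, FiniteField.pow_finrank_eq_card, hF]
  obtain ⟨f⟩ : Nonempty (K →ₐ[ZMod p] F) :=
    FiniteField.nonempty_algHom_of_finrank_dvd (hrank ▸ dvd_mul_right _ _)
  exact ⟨f.toRingHom.toAlgebra⟩

/-- Let `p > 3` be prime, `n = 2m`, `p^m ≡ 2 (mod 3)`. For `x^(p^m+2)` over `F_{p^n}`,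
the number of `b` with `δ(b) = 2` is exactly `p^m - 1`. -/
theorem stmt15 (p : ℕ) (hp : p.Prime) (hp3 : 3 < p) (m : ℕ) (hm : 0 < m) (n : ℕ)
    (hn : n = 2 * m) (hmod : p ^ m % 3 = 2)
    (F : Type*) [Field F] [Fintype F] [DecidableEq F]
    (hF : Fintype.card F = p ^ n) :
    omegaF F (p ^ m + 2) 2 = p ^ m - 1 := by
  subst hn
  have : Fact p.Prime := ⟨hp⟩
  let K := GaloisField p m
  let _ : Fintype K := Fintype.ofFinite K
  have hK : Fintype.card K = p ^ m := by
    rw [Fintype.card_eq_nat_card, GaloisField.card p m hm.ne']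
  have hKF : Fintype.card F = Fintype.card K ^ 2 := by rw [hF, hK, ← pow_mul, mul_comm]
  obtain ⟨_⟩ := nonempty_algebra_of_card_eq_pow hKF
  have hrank : Module.finrank K F = 2 :=
    Nat.pow_right_injective (Fintype.one_lt_card (α := K))
      (Module.card_eq_pow_finrank.symm.trans hKF)
  have hchar : ringChar K ≠ 2 := by
    rw [ringChar.eq K p]
    omega
  rw [← hK] at hmod ⊢
  exact omegaF_card_add_two_two hrank hmod hchar
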